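/- arXiv:2101.07346 — 7 statements merged into one kernel-verified Lean document; each statement's English description precedes it below -/
import Mathlib

section
/- The quartic F has multiplicity 4 at the point (a,b,c,d), i.e., it is a cone with vertex (a:b:c:d): for every multi-index (α₁,α₂,α₃,α₄) of non-negative integers with α₁+α₂+α₃+α₄ ≤ 3, the partial derivative ∂^{α₁+α₂+α₃+α₄}F/∂x^{α₁}∂y^{α₂}∂z^{α₃}∂w^{α₄}, evaluated at (x,y,z,w) = (a,b,c,d), is the zero polynomial in ℂ[a,b,c,d]. -/
open MvPolynomial

/-- The polynomial ring `ℂ[a,b,c,d][x,y,z,w]`: polynomials in the variables `x,y,z,w`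
with coefficients in `ℂ[a,b,c,d]`. -/
noncomputable abbrev B4Ring : Type := MvPolynomial (Fin 4) (MvPolynomial (Fin 4) ℂ)

noncomputable def a : B4Ring := C (X 0)
noncomputable def b : B4Ring := C (X 1)
noncomputable def c : B4Ring := C (X 2)
noncomputable def d : B4Ring := C (X 3)
noncomputable def x : B4Ring := X 0
noncomputable def y : B4Ring := X 1
noncomputable def z : B4Ring := X 2
noncomputable def w : B4Ring := X 3

set_option maxHeartbeats 1000000 in
/-- The equation of the unexpected cone of degree 4 associated to the `B₄` root system
(with general point `P = (a:b:c:d)`), as a polynomial in `x,y,z,w` with coefficients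
in `ℂ[a,b,c,d]`. -/
noncomputable def B4cone : B4Ring :=
    3*a*d*(c^2-b^2)*x^2*y*z + 3*b*d*(a^2-c^2)*x*y^2*z + 3*c*d*(b^2-a^2)*x*y*z^2
  + 3*a*c*(b^2-d^2)*x^2*y*w + 3*b*c*(d^2-a^2)*x*y^2*w + 3*d*c*(a^2-b^2)*x*y*w^2
  + 3*a*b*(d^2-c^2)*x^2*z*w + 3*c*b*(a^2-d^2)*x*z^2*w + 3*d*b*(c^2-a^2)*x*z*w^2
  + 3*b*a*(c^2-d^2)*y^2*z*w + 3*c*a*(d^2-b^2)*y*z^2*w + 3*d*a*(b^2-c^2)*y*z*w^2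
  + c*d*(d^2-c^2)*x*y*(x^2-y^2) + b*d*(b^2-d^2)*x*z*(x^2-z^2) + b*c*(c^2-b^2)*x*w*(x^2-w^2)
  + a*d*(d^2-a^2)*y*z*(y^2-z^2) + a*c*(a^2-c^2)*y*w*(y^2-w^2) + a*b*(b^2-a^2)*z*w*(z^2-w^2)



/-- The ideal of the point `(a,b,c,d)`. -/
noncomputable def ptIdeal : Ideal B4Ring :=
  RingHom.ker (MvPolynomial.eval (fun i => (X i : MvPolynomial (Fin 4) ℂ)))

/-- A derivation lowers the order of vanishing by at most one. -/
lemma pderiv_mem_pow (I : Ideal B4Ring) (i : Fin 4) (n : ℕ) :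
    ∀ f ∈ I ^ (n + 1), pderiv i f ∈ I ^ n := by
  induction n with
  | zero => intro f _; simp
  | succ n ih =>
    intro f hf
    rw [pow_succ] at hf
    refine Submodule.mul_induction_on hf ?_ ?_
    · intro p hp q hq
      rw [Derivation.leibniz, smul_eq_mul, smul_eq_mul]
      refine add_mem (Ideal.mul_mem_right _ _ hp) ?_
      rw [mul_comm, pow_succ]
      exact Ideal.mul_mem_mul (ih p hp) hq
    · intro p q hp hq
      rw [map_add]
      exact add_mem hp hq

lemma pderiv_iterate_mem_pow (I : Ideal B4Ring) (i : Fin 4) (k : ℕ) :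
    ∀ (n : ℕ) (f : B4Ring), f ∈ I ^ (n + k) → (⇑(pderiv i))^[k] f ∈ I ^ n := by
  induction k with
  | zero => intro n f hf; simpa using hf
  | succ k ih =>
    intro n f hf
    rw [Function.iterate_succ_apply]
    exact ih n _ (pderiv_mem_pow I i (n + k) f hf)

set_option maxHeartbeats 4000000 in
/-- The cone equation is invariant under translation by its vertex. -/
lemma B4cone_eq : B4cone =
    3*a*d*(c^2-b^2)*((x-a)*(x-a)*(y-b)*(z-c))
    + 3*b*d*(a^2-c^2)*((x-a)*(y-b)*(y-b)*(z-c))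
    + 3*c*d*(b^2-a^2)*((x-a)*(y-b)*(z-c)*(z-c))
    + 3*a*c*(b^2-d^2)*((x-a)*(x-a)*(y-b)*(w-d))
    + 3*b*c*(d^2-a^2)*((x-a)*(y-b)*(y-b)*(w-d))
    + 3*d*c*(a^2-b^2)*((x-a)*(y-b)*(w-d)*(w-d))
    + 3*a*b*(d^2-c^2)*((x-a)*(x-a)*(z-c)*(w-d))
    + 3*c*b*(a^2-d^2)*((x-a)*(z-c)*(z-c)*(w-d))
    + 3*d*b*(c^2-a^2)*((x-a)*(z-c)*(w-d)*(w-d))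
    + 3*b*a*(c^2-d^2)*((y-b)*(y-b)*(z-c)*(w-d))
    + 3*c*a*(d^2-b^2)*((y-b)*(z-c)*(z-c)*(w-d))
    + 3*d*a*(b^2-c^2)*((y-b)*(z-c)*(w-d)*(w-d))
    + c*d*(d^2-c^2)*((x-a)*(x-a)*(x-a)*(y-b))
    + (-(c*d*(d^2-c^2)))*((x-a)*(y-b)*(y-b)*(y-b))
    + b*d*(b^2-d^2)*((x-a)*(x-a)*(x-a)*(z-c))
    + (-(b*d*(b^2-d^2)))*((x-a)*(z-c)*(z-c)*(z-c))
    + b*c*(c^2-b^2)*((x-a)*(x-a)*(x-a)*(w-d))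
    + (-(b*c*(c^2-b^2)))*((x-a)*(w-d)*(w-d)*(w-d))
    + a*d*(d^2-a^2)*((y-b)*(y-b)*(y-b)*(z-c))
    + (-(a*d*(d^2-a^2)))*((y-b)*(z-c)*(z-c)*(z-c))
    + a*c*(a^2-c^2)*((y-b)*(y-b)*(y-b)*(w-d))
    + (-(a*c*(a^2-c^2)))*((y-b)*(w-d)*(w-d)*(w-d))
    + a*b*(b^2-a^2)*((z-c)*(z-c)*(z-c)*(w-d))
    + (-(a*b*(b^2-a^2)))*((z-c)*(w-d)*(w-d)*(w-d)) := by
  unfold B4cone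
  ring

lemma B4cone_mem : B4cone ∈ ptIdeal ^ 4 := by
  have hx : x - a ∈ ptIdeal := by simp [ptIdeal, RingHom.mem_ker, x, a]
  have hy : y - b ∈ ptIdeal := by simp [ptIdeal, RingHom.mem_ker, y, b]
  have hz : z - c ∈ ptIdeal := by simp [ptIdeal, RingHom.mem_ker, z, c]
  have hw : w - d ∈ ptIdeal := by simp [ptIdeal, RingHom.mem_ker, w, d]
  have hm : ∀ (k : B4Ring) {p q r s : B4Ring}, p ∈ ptIdeal → q ∈ ptIdeal → r ∈ ptIdeal →
      s ∈ ptIdeal → k * (p * q * r * s) ∈ ptIdeal ^ 4 := by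
    intro k p q r s hp hq hr hs
    refine Ideal.mul_mem_left _ _ ?_
    have h4 : ptIdeal ^ 4 = ptIdeal * ptIdeal * ptIdeal * ptIdeal := by ring
    rw [h4]
    exact Ideal.mul_mem_mul (Ideal.mul_mem_mul (Ideal.mul_mem_mul hp hq) hr) hs
  rw [B4cone_eq]
  refine add_mem (add_mem (add_mem (add_mem (add_mem (add_mem (add_mem (add_mem (add_mem (add_mem (add_mem (add_mem (add_mem (add_mem (add_mem (add_mem (add_mem (add_mem (add_mem (add_mem (add_mem (add_mem (add_mem (hm _ hx hx hy hz)
    (hm _ hx hy hy hz))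
    (hm _ hx hy hz hz))
    (hm _ hx hx hy hw))
    (hm _ hx hy hy hw))
    (hm _ hx hy hw hw))
    (hm _ hx hx hz hw))
    (hm _ hx hz hz hw))
    (hm _ hx hz hw hw))
    (hm _ hy hy hz hw))
    (hm _ hy hz hz hw))
    (hm _ hy hz hw hw))
    (hm _ hx hx hx hy))
    (hm _ hx hy hy hy))
    (hm _ hx hx hx hz))
    (hm _ hx hz hz hz))
    (hm _ hx hx hx hw))
    (hm _ hx hw hw hw))
    (hm _ hy hy hy hz))
    (hm _ hy hz hz hz))
    (hm _ hy hy hy hw))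
    (hm _ hy hw hw hw))
    (hm _ hz hz hz hw))
    (hm _ hz hw hw hw)

/-- The quartic `F` has multiplicity 4 at the point `(a,b,c,d)`: every partial derivative of
order at most `3` in the variables `x,y,z,w`, evaluated at `(x,y,z,w) = (a,b,c,d)`, is the
zero polynomial in `ℂ[a,b,c,d]`. -/
theorem B4cone_multiplicity_four (α₁ α₂ α₃ α₄ : ℕ) (h : α₁ + α₂ + α₃ + α₄ ≤ 3) :
    MvPolynomial.eval (fun i => (X i : MvPolynomial (Fin 4) ℂ))
      ((⇑(pderiv (0 : Fin 4)))^[α₁] ((⇑(pderiv (1 : Fin 4)))^[α₂]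
        ((⇑(pderiv (2 : Fin 4)))^[α₃] ((⇑(pderiv (3 : Fin 4)))^[α₄] B4cone)))) = 0 := by
  have h1 : B4cone ∈ ptIdeal ^ (1 + α₁ + α₂ + α₃ + α₄) :=
    Ideal.pow_le_pow_right (by omega) B4cone_mem
  have h2 := pderiv_iterate_mem_pow _ 0 _ _ _ (pderiv_iterate_mem_pow _ 1 _ _ _
    (pderiv_iterate_mem_pow _ 2 _ _ _ (pderiv_iterate_mem_pow _ 3 _ _ _ h1)))
  rw [pow_one] at h2
  exact h2
end

section
/- A vector v ∈ ℂ⁴ satisfies m₀(v) = m₁(v) = ⋯ = m₁₁(v) = 0 if and only if v is a scalar multiple of one of the 24 vectors of the F₄ configuration: P₁=(1,0,0,0), P₂=(0,1,0,0), P₃=(0,0,1,0), P₄=(0,0,0,1), P₅=(1,1,0,0), P₆=(1,0,1,0), P₇=(1,0,0,1), P₈=(0,1,1,0), P₉=(0,1,0,1), P₁₀=(0,0,1,1), P₁₁=(1,−1,0,0), P₁₂=(1,0,−1,0), P₁₃=(1,0,0,−1), P₁₄=(0,1,−1,0), P₁₅=(0,1,0,−1), P₁₆=(0,0,1,−1),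 together with the eight vectors (1,e₂,e₃,e₄) with e₂,e₃,e₄ ∈ {1,−1}. In particular, the common zero locus of m₀,…,m₁₁ in ℂ⁴ is the union of the 24 lines through the origin spanned by these vectors. -/
/-- The twelve degree-4 generators of the ideal of the `F₄` root-system configuration,
as functions on `ℂ⁴`. -/
noncomputable def m₀ (v : Fin 4 → ℂ) : ℂ := v 0 * v 1 * ((v 0)^2 - (v 1)^2)
noncomputable def m₁ (v : Fin 4 → ℂ) : ℂ := v 0 * v 1 * ((v 2)^2 - (v 3)^2)
noncomputable def m₂ (v : Fin 4 → ℂ) : ℂ := v 0 * v 2 * ((v 0)^2 - (v 2)^2)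
noncomputable def m₃ (v : Fin 4 → ℂ) : ℂ := v 0 * v 2 * ((v 1)^2 - (v 3)^2)
noncomputable def m₄ (v : Fin 4 → ℂ) : ℂ := v 0 * v 3 * ((v 0)^2 - (v 3)^2)
noncomputable def m₅ (v : Fin 4 → ℂ) : ℂ := v 0 * v 3 * ((v 2)^2 - (v 1)^2)
noncomputable def m₆ (v : Fin 4 → ℂ) : ℂ := v 1 * v 2 * ((v 1)^2 - (v 2)^2)
noncomputable def m₇ (v : Fin 4 → ℂ) : ℂ := v 1 * v 2 * ((v 0)^2 - (v 3)^2)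
noncomputable def m₈ (v : Fin 4 → ℂ) : ℂ := v 1 * v 3 * ((v 1)^2 - (v 3)^2)
noncomputable def m₉ (v : Fin 4 → ℂ) : ℂ := v 1 * v 3 * ((v 0)^2 - (v 2)^2)
noncomputable def m₁₀ (v : Fin 4 → ℂ) : ℂ := v 2 * v 3 * ((v 2)^2 - (v 3)^2)
noncomputable def m₁₁ (v : Fin 4 → ℂ) : ℂ := v 2 * v 3 * ((v 0)^2 - (v 1)^2)

/-- The 24 vectors of the `F₄` root-system configuration. -/
noncomputable def F4pts : List (Fin 4 → ℂ) :=
  [![1,0,0,0], ![0,1,0,0], ![0,0,1,0], ![0,0,0,1],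
   ![1,1,0,0], ![1,0,1,0], ![1,0,0,1],
   ![0,1,1,0], ![0,1,0,1], ![0,0,1,1],
   ![1,-1,0,0], ![1,0,-1,0], ![1,0,0,-1],
   ![0,1,-1,0], ![0,1,0,-1], ![0,0,1,-1],
   ![1,1,1,1], ![1,1,1,-1], ![1,1,-1,1], ![1,1,-1,-1],
   ![1,-1,1,1], ![1,-1,1,-1], ![1,-1,-1,1], ![1,-1,-1,-1]]

/-- Coordinatewise criterion for `v` to lie on the line through a listed vector. -/
theorem on_line_of_coords (v : Fin 4 → ℂ) (p q r s t : ℂ) (hP : ![p, q, r, s] ∈ F4pts)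
    (h0 : v 0 = t * p) (h1 : v 1 = t * q) (h2 : v 2 = t * r) (h3 : v 3 = t * s) :
    ∃ P ∈ F4pts, ∃ t : ℂ, v = t • P := by
  refine ⟨_, hP, t, ?_⟩
  funext i
  fin_cases i <;> simp [h0, h1, h2, h3]

/-- If two coordinates are nonzero and the corresponding generator vanishes, they agree up
to sign. -/
theorem eq_or_neg_of_gen {a b : ℂ} (ha : a ≠ 0) (hb : b ≠ 0) (h : a * b * (a ^ 2 - b ^ 2) = 0) :
    b = a ∨ b = -a := by
  have h' : a ^ 2 - b ^ 2 = 0 := by simpa [ha, hb] using h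
  exact sq_eq_sq_iff_eq_or_eq_neg.mp (sub_eq_zero.mp h').symm

/-- A vector `v ∈ ℂ⁴` is a common zero of `m₀, …, m₁₁` if and only if it is a scalar multiple
of one of the 24 vectors of the `F₄` configuration; i.e. the common zero locus of
`m₀, …, m₁₁` in `ℂ⁴` is the union of the 24 lines spanned by these vectors. -/
theorem common_zeros_of_F4_generators (v : Fin 4 → ℂ) :
    (m₀ v = 0 ∧ m₁ v = 0 ∧ m₂ v = 0 ∧ m₃ v = 0 ∧ m₄ v = 0 ∧ m₅ v = 0 ∧
     m₆ v = 0 ∧ m₇ v = 0 ∧ m₈ v = 0 ∧ m₉ v = 0 ∧ m₁₀ v = 0 ∧ m₁₁ v = 0) ↔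
    ∃ P ∈ F4pts, ∃ t : ℂ, v = t • P := by
  constructor
  · rintro ⟨h0, h1, h2, h3, h4, h5, h6, h7, h8, h9, h10, h11⟩
    simp only [m₀, m₁, m₂, m₃, m₄, m₅, m₆, m₇, m₈, m₉, m₁₀, m₁₁] at *
    by_cases a : v 0 = 0 <;> by_cases b : v 1 = 0 <;> by_cases c : v 2 = 0 <;>
      by_cases d : v 3 = 0
    · exact on_line_of_coords v 1 0 0 0 0 (by simp [F4pts]) (by simp [*]) (by simp [*]) (by simp [*]) (by simp [*])
    · exact on_line_of_coords v 0 0 0 1 (v 3) (by simp [F4pts]) (by simp [*]) (by simp [*]) (by simp [*]) (by simp [*])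
    · exact on_line_of_coords v 0 0 1 0 (v 2) (by simp [F4pts]) (by simp [*]) (by simp [*]) (by simp [*]) (by simp [*])
    · have e3 := eq_or_neg_of_gen c d h10
      clear h0 h1 h2 h3 h4 h5 h6 h7 h8 h9 h10 h11
      rcases e3 with e3 | e3
      · exact on_line_of_coords v 0 0 1 1 (v 2) (by simp [F4pts])
          (by simp [a]) (by simp [b]) (by simp) (by simp [e3])
      · exact on_line_of_coords v 0 0 1 (-1) (v 2) (by simp [F4pts])
          (by simp [a]) (by simp [b]) (by simp) (by simp [e3])
    · exact on_line_of_coords v 0 1 0 0 (v 1) (by simp [F4pts]) (by simp [*]) (by simp [*]) (by simp [*]) (by simp [*])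
    · have e3 := eq_or_neg_of_gen b d h8
      clear h0 h1 h2 h3 h4 h5 h6 h7 h8 h9 h10 h11
      rcases e3 with e3 | e3
      · exact on_line_of_coords v 0 1 0 1 (v 1) (by simp [F4pts])
          (by simp [a]) (by simp) (by simp [c]) (by simp [e3])
      · exact on_line_of_coords v 0 1 0 (-1) (v 1) (by simp [F4pts])
          (by simp [a]) (by simp) (by simp [c]) (by simp [e3])
    · have e2 := eq_or_neg_of_gen b c h6
      clear h0 h1 h2 h3 h4 h5 h6 h7 h8 h9 h10 h11
      rcases e2 with e2 | e2
      · exact on_line_of_coords v 0 1 1 0 (v 1) (by simp [F4pts])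
          (by simp [a]) (by simp) (by simp [e2]) (by simp [d])
      · exact on_line_of_coords v 0 1 (-1) 0 (v 1) (by simp [F4pts])
          (by simp [a]) (by simp) (by simp [e2]) (by simp [d])
    · simp_all
    · exact on_line_of_coords v 1 0 0 0 (v 0) (by simp [F4pts]) (by simp [*]) (by simp [*]) (by simp [*]) (by simp [*])
    · have e3 := eq_or_neg_of_gen a d h4
      clear h0 h1 h2 h3 h4 h5 h6 h7 h8 h9 h10 h11
      rcases e3 with e3 | e3
      · exact on_line_of_coords v 1 0 0 1 (v 0) (by simp [F4pts])
          (by simp) (by simp [b]) (by simp [c]) (by simp [e3])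
      · exact on_line_of_coords v 1 0 0 (-1) (v 0) (by simp [F4pts])
          (by simp) (by simp [b]) (by simp [c]) (by simp [e3])
    · have e2 := eq_or_neg_of_gen a c h2
      clear h0 h1 h2 h3 h4 h5 h6 h7 h8 h9 h10 h11
      rcases e2 with e2 | e2
      · exact on_line_of_coords v 1 0 1 0 (v 0) (by simp [F4pts])
          (by simp) (by simp [b]) (by simp [e2]) (by simp [d])
      · exact on_line_of_coords v 1 0 (-1) 0 (v 0) (by simp [F4pts])
          (by simp) (by simp [b]) (by simp [e2]) (by simp [d])
    · simp_all
    · have e1 := eq_or_neg_of_gen a b h0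
      clear h0 h1 h2 h3 h4 h5 h6 h7 h8 h9 h10 h11
      rcases e1 with e1 | e1
      · exact on_line_of_coords v 1 1 0 0 (v 0) (by simp [F4pts])
          (by simp) (by simp [e1]) (by simp [c]) (by simp [d])
      · exact on_line_of_coords v 1 (-1) 0 0 (v 0) (by simp [F4pts])
          (by simp) (by simp [e1]) (by simp [c]) (by simp [d])
    · simp_all
    · simp_all
    · have e1 := eq_or_neg_of_gen a b h0
      have e2 := eq_or_neg_of_gen a c h2
      have e3 := eq_or_neg_of_gen a d h4
      clear h0 h1 h2 h3 h4 h5 h6 h7 h8 h9 h10 h11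
      rcases e1 with e1 | e1 <;> rcases e2 with e2 | e2 <;> rcases e3 with e3 | e3
      · exact on_line_of_coords v 1 1 1 1 (v 0) (by simp [F4pts])
          (by simp) (by simp [e1]) (by simp [e2]) (by simp [e3])
      · exact on_line_of_coords v 1 1 1 (-1) (v 0) (by simp [F4pts])
          (by simp) (by simp [e1]) (by simp [e2]) (by simp [e3])
      · exact on_line_of_coords v 1 1 (-1) 1 (v 0) (by simp [F4pts])
          (by simp) (by simp [e1]) (by simp [e2]) (by simp [e3])
      · exact on_line_of_coords v 1 1 (-1) (-1) (v 0) (by simp [F4pts])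
          (by simp) (by simp [e1]) (by simp [e2]) (by simp [e3])
      · exact on_line_of_coords v 1 (-1) 1 1 (v 0) (by simp [F4pts])
          (by simp) (by simp [e1]) (by simp [e2]) (by simp [e3])
      · exact on_line_of_coords v 1 (-1) 1 (-1) (v 0) (by simp [F4pts])
          (by simp) (by simp [e1]) (by simp [e2]) (by simp [e3])
      · exact on_line_of_coords v 1 (-1) (-1) 1 (v 0) (by simp [F4pts])
          (by simp) (by simp [e1]) (by simp [e2]) (by simp [e3])
      · exact on_line_of_coords v 1 (-1) (-1) (-1) (v 0) (by simp [F4pts])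
          (by simp) (by simp [e1]) (by simp [e2]) (by simp [e3])
  · rintro ⟨P, hP, t, rfl⟩
    simp only [F4pts, List.mem_cons, List.not_mem_nil, or_false] at hP
    rcases hP with rfl | rfl | rfl | rfl | rfl | rfl | rfl | rfl | rfl | rfl | rfl | rfl | rfl | rfl | rfl | rfl | rfl | rfl | rfl | rfl | rfl | rfl | rfl | rfl <;>
      simp [m₀, m₁, m₂, m₃, m₄, m₅, m₆, m₇, m₈, m₉, m₁₀, m₁₁]
end

section
/- The six quintics f₁,…,f₆ form a basis of the ℂ-vector space of homogeneous polynomials of degree 5 in ℂ[x,y,z] that vanish at all 15 points P₁,…,P₁₅ of Z(H₃); in particular this space has dimension 6, i.e., the 15 points impose independent conditions on quintics. -/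
open MvPolynomial

/-- The six linear forms dual to the lines of the `H₃` configuration. -/
noncomputable def H3L (u : ℂ) : Fin 6 → MvPolynomial (Fin 3) ℂ :=
  ![X 1 - C (u - 1) * X 2, X 1 + C (u - 1) * X 2,
    X 0 - C u * X 2, X 0 + C u * X 2,
    X 0 - C (u - 1) * X 1, X 0 + C (u - 1) * X 1]

/-- The six quintics `fᵢ = ∏_{j ≠ i} Lⱼ`. -/
noncomputable def H3f (u : ℂ) (i : Fin 6) : MvPolynomial (Fin 3) ℂ :=
  ∏ j ∈ Finset.univ.erase i, H3L u j

/-- The 15 points of the `H₃` root-system configuration. -/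
noncomputable def H3pts (u : ℂ) : Fin 15 → (Fin 3 → ℂ) :=
  ![![1,0,0], ![0,1,0], ![0,0,1],
    ![1,u,u^2], ![-1,u,u^2], ![1,-u,u^2], ![1,u,-u^2],
    ![u,-u^2,1], ![-u,u^2,1], ![u,u^2,-1], ![u,u^2,1],
    ![u^2,1,-u], ![u^2,-1,u], ![-u^2,1,u], ![u^2,1,u]]

/-- The `ℂ`-vector space of homogeneous polynomials of degree `d` in `ℂ[x,y,z]`
vanishing at all 15 points of `Z(H₃)`. -/
noncomputable def H3V (u : ℂ) (d : ℕ) : Submodule ℂ (MvPolynomial (Fin 3) ℂ) :=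
  homogeneousSubmodule (Fin 3) ℂ d ⊓
    ⨅ i : Fin 15, LinearMap.ker (aeval (R := ℂ) (H3pts u i)).toLinearMap

/-- Evaluation of a homogeneous quintic at a scaled point. -/
lemma H3_eval_smul {h : MvPolynomial (Fin 3) ℂ} (hh : h.IsHomogeneous 5) (c : ℂ)
    (v : Fin 3 → ℂ) : eval (c • v) h = c ^ 5 * eval v h := by
  rw [eval_eq, eval_eq, Finset.mul_sum]
  refine Finset.sum_congr rfl fun d hd => ?_
  have hdeg : ∑ i ∈ d.support, d i = 5 := by
    have := hh (mem_support_iff.1 hd)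
    simpa only [Finsupp.weight_apply, Finsupp.sum, Pi.one_apply, smul_eq_mul, mul_one] using this
  simp only [Pi.smul_apply, smul_eq_mul, mul_pow, Finset.prod_mul_distrib,
    Finset.prod_pow_eq_pow_sum, hdeg]
  ring

/-- A quintic vanishing at six points of an affine line vanishes on that line. -/
lemma H3_line {h : MvPolynomial (Fin 3) ℂ} (hh : h.IsHomogeneous 5) (p q : Fin 3 → ℂ)
    (t : Fin 6 → ℂ) (ht : Function.Injective t) (hz : ∀ i, eval (p + t i • q) h = 0) (s : ℂ) :
    eval (p + s • q) h = 0 := by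
  let F : Polynomial ℂ :=
    aeval (fun i => Polynomial.C (p i) + Polynomial.C (q i) * Polynomial.X) h
  have hF : ∀ s : ℂ, F.eval s = eval (p + s • q) h := by
    intro s
    have h1 : F.eval s = (Polynomial.aeval s) F := by
      rw [Polynomial.coe_aeval_eq_eval]
    have h2 : (fun i => (Polynomial.aeval s)
        (Polynomial.C (p i) + Polynomial.C (q i) * Polynomial.X)) = p + s • q := by
      funext i
      rw [Polynomial.coe_aeval_eq_eval, Polynomial.eval_add, Polynomial.eval_C,
        Polynomial.eval_C_mul, Polynomial.eval_X, Pi.add_apply, Pi.smul_apply, smul_eq_mul,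
        mul_comm]
    rw [h1, ← AlgHom.comp_apply, MvPolynomial.comp_aeval, h2, MvPolynomial.aeval_eq_eval]
  have hd : F.natDegree ≤ 5 * 1 := by
    refine aeval_natDegree_le h hh.totalDegree_le _ fun i => ?_
    compute_degree
  have h0 : F = 0 := by
    refine Polynomial.eq_zero_of_natDegree_lt_card_of_eval_eq_zero F ht ?_ ?_
    · intro i
      rw [hF, hz]
    · rw [Fintype.card_fin]
      omega
  rw [← hF, h0, Polynomial.eval_zero]

/-- Base point of the parametrisation of the `i`-th line. -/
noncomputable def H3p : Fin 6 → (Fin 3 → ℂ) :=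
  ![![1, 0, 0], ![1, 0, 0], ![0, 1, 0], ![0, 1, 0], ![0, 0, 1], ![0, 0, 1]]

/-- Direction of the parametrisation of the `i`-th line. -/
noncomputable def H3q (u : ℂ) : Fin 6 → (Fin 3 → ℂ) :=
  ![![0, u - 1, 1], ![0, 1 - u, 1], ![u, 0, 1], ![-u, 0, 1], ![u - 1, 1, 0], ![1 - u, 1, 0]]

/-- Parameters of the six points used on the `i`-th line. -/
noncomputable def H3s (u : ℂ) : Fin 6 → (Fin 6 → ℂ) :=
  ![![1, 0, u - 1, 1 - u, u + 1, -(u + 1)], ![1, 0, u - 1, 1 - u, u + 1, -(u + 1)],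
    ![1, 0, u, -u, 2 - u, u - 2], ![1, 0, u, -u, 2 - u, u - 2],
    ![1, 0, u - 1, 1 - u, u + 1, -(u + 1)], ![1, 0, u - 1, 1 - u, u + 1, -(u + 1)]]

lemma H3s_inj (u : ℂ) (hu : u ^ 2 = u + 1) (i : Fin 6) : Function.Injective (H3s u i) := by
  have key : ∀ a b : Fin 6, a < b → H3s u i a ≠ H3s u i b := by
    intro a b hab
    fin_cases i <;> fin_cases a <;> fin_cases b <;> simp [H3s] at hab ⊢ <;> grind
  intro a b hab
  rcases lt_trichotomy a b with h | h | h
  · exact absurd hab (key a b h)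
  · exact h
  · exact absurd hab.symm (key b a h)

/-- Index of the configuration point with the given parameter. -/
def H3k : Fin 6 → (Fin 5 → Fin 15) :=
  ![![0, 14, 13, 3, 4], ![0, 12, 11, 5, 6], ![1, 14, 12, 10, 7], ![1, 13, 11, 8, 9],
    ![2, 3, 6, 10, 9], ![2, 4, 5, 8, 7]]

/-- Scaling factors. -/
noncomputable def H3c (u : ℂ) : Fin 6 → (Fin 5 → ℂ) :=
  ![![1, 2 - u, u - 2, 1, -1], ![1, 2 - u, 2 - u, 1, 1], ![1, 1, -1, 2 - u, u - 2],
    ![1, 1, 1, 2 - u, 2 - u], ![1, 2 - u, u - 2, 1, -1], ![1, 2 - u, 2 - u, 1, 1]]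

lemma H3_pt (u : ℂ) (hu : u ^ 2 = u + 1) (i : Fin 6) (m : Fin 5) :
    H3p i + H3s u i m.succ • H3q u i = H3c u i m • H3pts u (H3k i m) := by
  ext a
  fin_cases i <;> fin_cases m <;> fin_cases a <;>
    simp [H3p, H3q, H3s, H3c, H3k, H3pts] <;> grind

/-- Any point on the `i`-th line is in the span of `p` and `q`. -/
lemma H3_param (u : ℂ) (hu : u ^ 2 = u + 1) (i : Fin 6) (v : Fin 3 → ℂ)
    (hv : eval v (H3L u i) = 0) : ∃ a b : ℂ, v = a • H3p i + b • H3q u i := by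
  refine ⟨(![v 0, v 0, v 1, v 1, v 2, v 2] : Fin 6 → ℂ) i,
    (![v 2, v 2, v 2, v 2, v 1, v 1] : Fin 6 → ℂ) i, ?_⟩
  ext a
  fin_cases i <;> fin_cases a <;> simp [H3L, H3p, H3q] at hv ⊢ <;> grind

/-- The auxiliary point on the `i`-th line. -/
noncomputable def H3Q (u : ℂ) (i : Fin 6) : Fin 3 → ℂ := H3p i + H3q u i

lemma H3L_Q (u : ℂ) (i : Fin 6) : eval (H3Q u i) (H3L u i) = 0 := by
  fin_cases i <;> simp [H3L, H3Q, H3p, H3q]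

lemma H3L_Q_ne (u : ℂ) (hu : u ^ 2 = u + 1) (i j : Fin 6) (hij : j ≠ i) :
    eval (H3Q u i) (H3L u j) ≠ 0 := by
  fin_cases i <;> fin_cases j <;> simp [H3L, H3Q, H3p, H3q] at hij ⊢ <;> grind

lemma H3f_Q_ne (u : ℂ) (hu : u ^ 2 = u + 1) (i : Fin 6) : eval (H3Q u i) (H3f u i) ≠ 0 := by
  rw [H3f, map_prod, Finset.prod_ne_zero_iff]
  intro j hj
  exact H3L_Q_ne u hu i j (Finset.ne_of_mem_erase hj)

lemma H3f_Q (u : ℂ) (i j : Fin 6) (hij : j ≠ i) : eval (H3Q u i) (H3f u j) = 0 := by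
  rw [H3f, map_prod]
  exact Finset.prod_eq_zero (Finset.mem_erase.2 ⟨hij.symm, Finset.mem_univ i⟩) (H3L_Q u i)

lemma H3_mem (u : ℂ) (h : MvPolynomial (Fin 3) ℂ) :
    h ∈ H3V u 5 ↔ h.IsHomogeneous 5 ∧ ∀ k, eval (H3pts u k) h = 0 := by
  simp [H3V, Submodule.mem_inf, Submodule.mem_iInf, LinearMap.mem_ker, aeval_eq_eval,
    mem_homogeneousSubmodule]

lemma H3L_hom (u : ℂ) (i : Fin 6) : (H3L u i).IsHomogeneous 1 := by
  have hX : ∀ j : Fin 3, (X j : MvPolynomial (Fin 3) ℂ).IsHomogeneous 1 :=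
    fun j => isHomogeneous_X ℂ j
  have hC : ∀ (c : ℂ) (j : Fin 3), (C c * X j : MvPolynomial (Fin 3) ℂ).IsHomogeneous 1 := by
    intro c j
    simpa using (isHomogeneous_C (Fin 3) c).mul (hX j)
  fin_cases i
  · exact (hX 1).sub (hC _ 2)
  · exact (hX 1).add (hC _ 2)
  · exact (hX 0).sub (hC _ 2)
  · exact (hX 0).add (hC _ 2)
  · exact (hX 0).sub (hC _ 1)
  · exact (hX 0).add (hC _ 1)

/-- Each configuration point lies on two different lines. -/
lemma H3_two (u : ℂ) (hu : u ^ 2 = u + 1) (k : Fin 15) : ∃ a b : Fin 6, a ≠ b ∧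
    eval (H3pts u k) (H3L u a) = 0 ∧ eval (H3pts u k) (H3L u b) = 0 := by
  refine ⟨(![0, 2, 4, 0, 0, 1, 1, 2, 3, 3, 2, 1, 1, 0, 0] : Fin 15 → Fin 6) k,
    (![1, 3, 5, 4, 5, 5, 4, 5, 5, 4, 4, 3, 2, 3, 2] : Fin 15 → Fin 6) k, ?_, ?_, ?_⟩
  · revert k; decide
  · fin_cases k <;> simp [H3L, H3pts] <;> grind
  · fin_cases k <;> simp [H3L, H3pts] <;> grind

lemma H3f_mem (u : ℂ) (hu : u ^ 2 = u + 1) (i : Fin 6) : H3f u i ∈ H3V u 5 := by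
  rw [H3_mem]
  constructor
  · have := IsHomogeneous.prod (Finset.univ.erase i) (H3L u) (fun _ => 1)
      (fun j _ => H3L_hom u j)
    simpa [H3f] using this
  · intro k
    obtain ⟨a, b, hab, ha, hb⟩ := H3_two u hu k
    rw [H3f, map_prod]
    by_cases h : a = i
    · exact Finset.prod_eq_zero
        (Finset.mem_erase.2 ⟨fun hb' => hab (h.trans hb'.symm), Finset.mem_univ b⟩) hb
    · exact Finset.prod_eq_zero (Finset.mem_erase.2 ⟨h, Finset.mem_univ a⟩) ha

/-- A quintic vanishing at the configuration and at the auxiliary points vanishes on the lines. -/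
lemma H3_on_line (u : ℂ) (hu : u ^ 2 = u + 1) (h : MvPolynomial (Fin 3) ℂ) (hV : h ∈ H3V u 5)
    (hQ : ∀ i, eval (H3Q u i) h = 0) (i : Fin 6) (v : Fin 3 → ℂ)
    (hv : eval v (H3L u i) = 0) : eval v h = 0 := by
  obtain ⟨hh, hP⟩ := (H3_mem u h).1 hV
  have h1 : ∀ s : ℂ, eval (H3p i + s • H3q u i) h = 0 := by
    refine H3_line hh _ _ (H3s u i) (H3s_inj u hu i) fun m => ?_
    refine Fin.cases ?_ (fun m => ?_) m
    · have : H3s u i 0 = 1 := by fin_cases i <;> simp [H3s]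
      rw [this, one_smul]
      exact hQ i
    · rw [H3_pt u hu, H3_eval_smul hh, hP, mul_zero]
  have h2 : ∀ t : ℂ, t ≠ 0 → eval (H3q u i + t • H3p i) h = 0 := by
    intro t ht
    have : H3q u i + t • H3p i = t • (H3p i + t⁻¹ • H3q u i) := by
      rw [smul_add, smul_smul, mul_inv_cancel₀ ht, one_smul, add_comm]
    rw [this, H3_eval_smul hh, h1, mul_zero]
  have h3 : ∀ t : ℂ, eval (H3q u i + t • H3p i) h = 0 := by
    refine H3_line hh _ _ (fun m : Fin 6 => ((m : ℕ) : ℂ) + 1) ?_ ?_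
    · intro a b hab
      apply Fin.ext
      simpa using hab
    · intro m
      exact h2 _ (Nat.cast_add_one_ne_zero _)
  obtain ⟨a, b, rfl⟩ := H3_param u hu i v hv
  by_cases ha : a = 0
  · have := h3 0
    rw [zero_smul, add_zero] at this
    rw [ha, zero_smul, zero_add, H3_eval_smul hh, this, mul_zero]
  · have : a • H3p i + b • H3q u i = a • (H3p i + (a⁻¹ * b) • H3q u i) := by
      rw [smul_add, smul_smul, mul_inv_cancel_left₀ ha]
    rw [this, H3_eval_smul hh, h1, mul_zero]

lemma H3L_add (u : ℂ) (i : Fin 6) (v w : Fin 3 → ℂ) (t : ℂ) :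
    eval (v + t • w) (H3L u i) = eval v (H3L u i) + t * eval w (H3L u i) := by
  fin_cases i <;> simp [H3L] <;> ring

set_option maxHeartbeats 2000000 in
/-- A quintic vanishing on six lines in general position is zero. -/
lemma H3_zero (u : ℂ) (hu : u ^ 2 = u + 1) (h : MvPolynomial (Fin 3) ℂ)
    (hh : h.IsHomogeneous 5)
    (hl : ∀ i (v : Fin 3 → ℂ), eval v (H3L u i) = 0 → eval v h = 0) : h = 0 := by
  let w : Fin 3 → ℂ := ![1, 2, 3]
  have hw : ∀ i, eval w (H3L u i) ≠ 0 := by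
    intro i
    fin_cases i <;> simp [H3L, w] <;> grind
  let D : MvPolynomial (Fin 3) ℂ := ∏ x ∈ (Finset.univ : Finset (Fin 6)).offDiag,
    (H3L u x.1 * C (eval w (H3L u x.2)) - H3L u x.2 * C (eval w (H3L u x.1)))
  have hD : D ≠ 0 := by
    refine Finset.prod_ne_zero_iff.2 ?_
    rintro ⟨i, j⟩ hij h0
    have hij' : i ≠ j := (Finset.mem_offDiag.1 hij).2.2
    have := congrArg (eval (![5, -1, 2] : Fin 3 → ℂ)) h0
    clear h0 hij hl
    revert this
    fin_cases i <;> fin_cases j <;> simp [H3L, w] at hij' ⊢ <;> grind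
  have hm : h * D = 0 := by
    refine MvPolynomial.funext fun p => ?_
    rw [map_mul, map_zero]
    by_cases hDp : eval p D = 0
    · rw [hDp, mul_zero]
    · have hne : ∀ i j, i ≠ j → eval p (H3L u i) * eval w (H3L u j)
          - eval p (H3L u j) * eval w (H3L u i) ≠ 0 := by
        intro i j hij
        simp only [D, map_prod] at hDp
        have := Finset.prod_ne_zero_iff.1 hDp (i, j)
          (Finset.mem_offDiag.2 ⟨Finset.mem_univ _, Finset.mem_univ _, hij⟩)
        simpa using this
      have hp := H3_line hh p w (fun i => - eval p (H3L u i) / eval w (H3L u i)) ?_ ?_ 0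
      · rw [zero_smul, add_zero] at hp
        rw [hp, zero_mul]
      · intro i j hij
        by_contra hc
        apply hne i j hc
        have := (div_eq_div_iff (hw i) (hw j)).1 hij
        linear_combination -this
      · intro i
        refine hl i _ ?_
        rw [H3L_add, div_mul_cancel₀ _ (hw i)]
        ring
  exact (mul_eq_zero.1 hm).resolve_right hD

/-- The six quintics `f₁, …, f₆` form a basis of the space of homogeneous quintics vanishing
at the 15 points of `Z(H₃)`; in particular this space has dimension 6. -/
theorem H3f_is_basis_of_quintics (u : ℂ) (hu : u ^ 2 = u + 1) :
    (∀ i, H3f u i ∈ H3V u 5) ∧ LinearIndependent ℂ (H3f u) ∧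
    Submodule.span ℂ (Set.range (H3f u)) = H3V u 5 ∧
    Module.finrank ℂ (H3V u 5) = 6 := by
  have hev : ∀ (c : Fin 6 → ℂ) (i : Fin 6),
      eval (H3Q u i) (∑ j, c j • H3f u j) = c i * eval (H3Q u i) (H3f u i) := by
    intro c i
    rw [map_sum, Finset.sum_eq_single i]
    · rw [smul_eval]
    · intro j _ hj
      rw [smul_eval, H3f_Q u i j hj, mul_zero]
    · intro hi
      exact absurd (Finset.mem_univ i) hi
  have hli : LinearIndependent ℂ (H3f u) := by
    rw [Fintype.linearIndependent_iff]
    intro c hc i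
    have := hev c i
    rw [hc, map_zero] at this
    exact (mul_eq_zero.1 this.symm).resolve_right (H3f_Q_ne u hu i)
  have hspan : Submodule.span ℂ (Set.range (H3f u)) = H3V u 5 := by
    apply le_antisymm
    · rw [Submodule.span_le]
      rintro _ ⟨i, rfl⟩
      exact H3f_mem u hu i
    · intro g hg
      let c : Fin 6 → ℂ := fun i => eval (H3Q u i) g / eval (H3Q u i) (H3f u i)
      have hs : ∑ j, c j • H3f u j ∈ H3V u 5 :=
        Submodule.sum_mem _ fun j _ => Submodule.smul_mem _ _ (H3f_mem u hu j)
      have hd := Submodule.sub_mem _ hg hs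
      have h0 : g - ∑ j, c j • H3f u j = 0 := by
        refine H3_zero u hu _ ((H3_mem u _).1 hd).1 ?_
        refine H3_on_line u hu _ hd ?_
        intro i
        rw [map_sub, hev, div_mul_cancel₀ _ (H3f_Q_ne u hu i), sub_self]
      rw [sub_eq_zero.1 h0]
      exact Submodule.sum_mem _ fun j _ =>
        Submodule.smul_mem _ _ (Submodule.subset_span ⟨j, rfl⟩)
  refine ⟨H3f_mem u hu, hli, hspan, ?_⟩
  rw [← hspan, finrank_span_eq_card hli, Fintype.card_fin]
end

section
/- In ℂ[x,y,z] the following identity of ideals holds: (xyz, G_x, G_y, G_z) = (xy, yz, zx) ∩ (x, yz(y^m + (−1)^{m+1} z^m)) ∩ (y, xz(z^m + (−1)^{m+1} x^m)) ∩ (z, xy(x^m + (−1)^{m+1} y^m)). -/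
open MvPolynomial

/-- `G_x = yz(yᵐ − (−z)ᵐ)`. -/
noncomputable def Gx (m : ℕ) : MvPolynomial (Fin 3) ℂ :=
  X 1 * X 2 * ((X 1) ^ m - (-(X 2)) ^ m)

/-- `G_y = zx(zᵐ − (−x)ᵐ)`. -/
noncomputable def Gy (m : ℕ) : MvPolynomial (Fin 3) ℂ :=
  X 2 * X 0 * ((X 2) ^ m - (-(X 0)) ^ m)

/-- `G_z = xy(xᵐ − (−y)ᵐ)`. -/
noncomputable def Gz (m : ℕ) : MvPolynomial (Fin 3) ℂ :=
  X 0 * X 1 * ((X 0) ^ m - (-(X 1)) ^ m)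

/-- In `ℂ[x,y,z]` the ideal `(xyz, G_x, G_y, G_z)` equals the intersection
`(xy,yz,zx) ∩ (x, yz(yᵐ + (−1)^{m+1} zᵐ)) ∩ (y, xz(zᵐ + (−1)^{m+1} xᵐ)) ∩
(z, xy(xᵐ + (−1)^{m+1} yᵐ))`. -/
theorem Fermat_ideal_intersection (m : ℕ) (hm : 2 ≤ m) :
    Ideal.span {X 0 * X 1 * X 2, Gx m, Gy m, Gz m} =
      Ideal.span {X 0 * X 1, X 1 * X 2, X 2 * X 0} ⊓
      Ideal.span {(X 0 : MvPolynomial (Fin 3) ℂ),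
        X 1 * X 2 * ((X 1) ^ m + (-1) ^ (m+1) * (X 2) ^ m)} ⊓
      Ideal.span {(X 1 : MvPolynomial (Fin 3) ℂ),
        X 0 * X 2 * ((X 2) ^ m + (-1) ^ (m+1) * (X 0) ^ m)} ⊓
      Ideal.span {(X 2 : MvPolynomial (Fin 3) ℂ),
        X 0 * X 1 * ((X 0) ^ m + (-1) ^ (m+1) * (X 1) ^ m)} := by
  have hneg : ∀ t : MvPolynomial (Fin 3) ℂ, (-1) ^ (m+1) * t ^ m = -(-t) ^ m := by
    intro t
    rw [neg_pow t m]
    ring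
  simp only [hneg]
  have p1 : Prime (X 1 : MvPolynomial (Fin 3) ℂ) := MvPolynomial.X_prime
  have p2 : Prime (X 2 : MvPolynomial (Fin 3) ℂ) := MvPolynomial.X_prime
  have h10 : ¬ (X 1 : MvPolynomial (Fin 3) ℂ) ∣ X 0 := by
    rw [MvPolynomial.X_dvd_X]; simp
  have h20 : ¬ (X 2 : MvPolynomial (Fin 3) ℂ) ∣ X 0 := by
    rw [MvPolynomial.X_dvd_X]; simp
  have h21 : ¬ (X 2 : MvPolynomial (Fin 3) ℂ) ∣ X 1 := by
    rw [MvPolynomial.X_dvd_X]; simp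
  unfold Gx Gy Gz
  generalize (X 0 : MvPolynomial (Fin 3) ℂ) = x at *
  generalize (X 1 : MvPolynomial (Fin 3) ℂ) = y at *
  generalize (X 2 : MvPolynomial (Fin 3) ℂ) = z at *
  rw [← sub_eq_add_neg, ← sub_eq_add_neg, ← sub_eq_add_neg]
  generalize y ^ m - (-z) ^ m = A
  generalize z ^ m - (-x) ^ m = B
  generalize x ^ m - (-y) ^ m = C
  apply le_antisymm
  · rw [Ideal.span_le]
    rintro f hf
    simp only [Set.mem_insert_iff, Set.mem_singleton_iff] at hf
    simp only [SetLike.mem_coe, Ideal.mem_inf, Ideal.mem_span_insert,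
      Ideal.mem_span_singleton']
    rcases hf with rfl | rfl | rfl | rfl
    · exact ⟨⟨⟨⟨z, _, ⟨0, _, ⟨0, rfl⟩, rfl⟩, by ring⟩, ⟨y * z, _, ⟨0, rfl⟩, by ring⟩⟩,
        ⟨x * z, _, ⟨0, rfl⟩, by ring⟩⟩, ⟨x * y, _, ⟨0, rfl⟩, by ring⟩⟩
    · exact ⟨⟨⟨⟨0, _, ⟨A, _, ⟨0, rfl⟩, rfl⟩, by ring⟩, ⟨0, _, ⟨1, rfl⟩, by ring⟩⟩,
        ⟨z * A, _, ⟨0, rfl⟩, by ring⟩⟩, ⟨y * A, _, ⟨0, rfl⟩, by ring⟩⟩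
    · exact ⟨⟨⟨⟨0, _, ⟨0, _, ⟨B, rfl⟩, rfl⟩, by ring⟩, ⟨z * B, _, ⟨0, rfl⟩, by ring⟩⟩,
        ⟨0, _, ⟨1, rfl⟩, by ring⟩⟩, ⟨x * B, _, ⟨0, rfl⟩, by ring⟩⟩
    · exact ⟨⟨⟨⟨C, _, ⟨0, _, ⟨0, rfl⟩, rfl⟩, by ring⟩, ⟨y * C, _, ⟨0, rfl⟩, by ring⟩⟩,
        ⟨x * C, _, ⟨0, rfl⟩, by ring⟩⟩, ⟨0, _, ⟨1, rfl⟩, by ring⟩⟩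
  · rintro f ⟨⟨⟨-, h1⟩, h2⟩, h3⟩
    simp only [SetLike.mem_coe, Ideal.mem_span_pair] at h1 h2 h3
    obtain ⟨a, b, h1⟩ := h1
    obtain ⟨c, d, h2⟩ := h2
    obtain ⟨l, k, h3⟩ := h3
    have e1 : y ∣ x * (a - z * B * d) :=
      ⟨c - b * z * A, by linear_combination h1 - h2⟩
    obtain ⟨e, he⟩ := (p1.dvd_or_dvd e1).resolve_left h10
    have e2 : z ∣ x * (y * (e - C * k)) :=
      ⟨l - b * y * A - d * x * B, by linear_combination h1 - h3 - x * he⟩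
    obtain ⟨g, hg⟩ := (p2.dvd_or_dvd ((p2.dvd_or_dvd e2).resolve_left h20)).resolve_left h21
    simp only [Ideal.mem_span_insert, Ideal.mem_span_singleton']
    exact ⟨g, _, ⟨b, _, ⟨d, _, ⟨k, rfl⟩, rfl⟩, rfl⟩, by
      linear_combination -h1 + x * he + x * y * hg⟩
end

section
/- The ℂ-vector space of homogeneous polynomials of degree m+2 in ℂ[x,y,z] vanishing at all 3m+3 points of Z(F_{m,3}) has dimension m(m+1)/2 + 3; moreover it is spanned by G_x, G_y, G_z together with the polynomials xyz·μ, where μ ranges over all monomials of degree m−1 in x, y, z. -/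
open MvPolynomial

/-- The augmented Fermat configuration `Z(F_{m,3})` of `3m+3` points. -/
def Zm3 (m : ℕ) : Set (Fin 3 → ℂ) :=
  {![1,0,0], ![0,1,0], ![0,0,1]} ∪
    {v | ∃ l : ℂ, l ^ m = (-1) ^ m ∧ (v = ![1,l,0] ∨ v = ![0,1,l] ∨ v = ![l,0,1])}

/-- The `ℂ`-vector space of homogeneous polynomials of degree `m+2` in `ℂ[x,y,z]`
vanishing at all `3m+3` points of `Z(F_{m,3})`. -/
noncomputable def Vm3 (m : ℕ) : Submodule ℂ (MvPolynomial (Fin 3) ℂ) :=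
  homogeneousSubmodule (Fin 3) ℂ (m + 2) ⊓
    ⨅ v ∈ Zm3 m, LinearMap.ker (aeval (R := ℂ) v).toLinearMap

lemma weight_one3 (d : Fin 3 →₀ ℕ) : (Finsupp.weight (1 : Fin 3 → ℕ)) d = d.degree :=
  (DFunLike.congr_fun Finsupp.degree_eq_weight_one d).symm

lemma coeff_line (i j k : Fin 3) (hij : i ≠ j) (hik : i ≠ k) (hjk : j ≠ k)
    (v : Fin 3 → Polynomial ℂ) (hi : v i = 1) (hj : v j = Polynomial.X) (hk : v k = 0)
    {N : ℕ} {f : MvPolynomial (Fin 3) ℂ} (hf : f.IsHomogeneous N) (d : Fin 3 →₀ ℕ)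
    (hd : d i + d j + d k = N) (hdk : d k = 0) :
    (aeval v f).coeff (d j) = coeff d f := by
  have hu : (Finset.univ : Finset (Fin 3)) = {i, j, k} := by
    clear hi hj hk hd hdk; revert i j k; decide
  have hall : ∀ t, t = i ∨ t = j ∨ t = k := by
    intro t; have := Finset.mem_univ t; rw [hu] at this; simpa using this
  rw [aeval_def, eval₂_eq', Polynomial.finsetSum_coeff]
  have key : ∀ e : Fin 3 →₀ ℕ, ∏ t, v t ^ e t = Polynomial.X ^ e j * 0 ^ e k := by
    intro e
    rw [hu, Finset.prod_insert (by simp [hij, hik]), Finset.prod_pair hjk, hi, hj, hk]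
    simp
  have hdeg : ∀ e : Fin 3 →₀ ℕ, coeff e f ≠ 0 → e i + e j + e k = N := by
    intro e he
    have := hf he
    rw [weight_one3] at this
    rw [← this, Finsupp.degree_eq_sum, hu, Finset.sum_insert (by simp [hij, hik]),
      Finset.sum_pair hjk, add_assoc]
  rw [Finset.sum_eq_single d]
  · rw [key, hdk]; simp
  · intro e he hne
    rw [key, ← Polynomial.C_eq_algebraMap, Polynomial.coeff_C_mul]
    by_cases h0 : e k = 0
    · rw [h0, pow_zero, mul_one, Polynomial.coeff_X_pow, if_neg, mul_zero]
      intro h1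
      apply hne
      have h2 := hdeg e (mem_support_iff.mp he)
      ext t
      rcases hall t with rfl | rfl | rfl <;> omega
    · simp [h0]
  · intro h
    rw [notMem_support_iff.mp h]; simp

lemma univ_lemma (m : ℕ) (hm : 2 ≤ m) (g : Polynomial ℂ) (hg : g.natDegree ≤ m + 1)
    (h0 : g.eval 0 = 0) (hl : ∀ l : ℂ, l ^ m = (-1) ^ m → g.eval l = 0) :
    ∃ a : ℂ, g = Polynomial.C a *
      (Polynomial.X * (Polynomial.X ^ m - Polynomial.C ((-1) ^ m))) := by
  have hm0 : m ≠ 0 := by omega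
  refine ⟨g.coeff (m+1), ?_⟩
  rw [← sub_eq_zero]
  have hprim := Complex.isPrimitiveRoot_exp m hm0
  have hc := hprim.card_nthRootsFinset
  classical
  let s : Finset ℂ := insert 0 ((Polynomial.nthRootsFinset m (1:ℂ)).image (fun z => -z))
  have hs : s.card = m + 1 := by
    rw [Finset.card_insert_of_notMem, Finset.card_image_of_injective _ neg_injective, hc]
    intro h
    obtain ⟨z, hz, hz0⟩ := Finset.mem_image.mp h
    rw [Polynomial.mem_nthRootsFinset (by omega)] at hz
    have : z = 0 := by simpa using hz0
    rw [this, zero_pow hm0] at hz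
    exact zero_ne_one hz
  apply Polynomial.eq_zero_of_natDegree_lt_card_of_eval_eq_zero' _ s
  · intro z hz
    rcases Finset.mem_insert.mp hz with rfl | hz
    · simp [h0]
    · obtain ⟨w, hw, rfl⟩ := Finset.mem_image.mp hz
      rw [Polynomial.mem_nthRootsFinset (by omega)] at hw
      have : (-w) ^ m = (-1) ^ m := by rw [neg_pow, hw, mul_one]
      simp [hl _ this, this]
  · rw [hs, Nat.lt_succ_iff, Polynomial.natDegree_le_iff_coeff_eq_zero]
    intro n hn
    rw [Polynomial.coeff_sub, Polynomial.coeff_C_mul]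
    obtain ⟨n, rfl⟩ : ∃ k, n = k + 1 := ⟨n - 1, by omega⟩
    rw [Polynomial.coeff_X_mul, Polynomial.coeff_sub, Polynomial.coeff_X_pow, Polynomial.coeff_C]
    rcases eq_or_ne n m with rfl | h
    · simp [hm0]
    · rw [Polynomial.coeff_eq_zero_of_natDegree_lt (by omega)]
      rw [if_neg h, if_neg (by omega)]; simp

lemma side (m : ℕ) (hm : 2 ≤ m) (i j k : Fin 3) (hij : i ≠ j) (hik : i ≠ k) (hjk : j ≠ k)
    (v : Fin 3 → Polynomial ℂ) (hi : v i = 1) (hj : v j = Polynomial.X) (hk : v k = 0)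
    {f : MvPolynomial (Fin 3) ℂ} (hf : f.IsHomogeneous (m + 2))
    (h1 : ∀ u : Fin 3 → ℂ, u i = 1 → u j = 0 → u k = 0 → aeval u f = 0)
    (h2 : ∀ u : Fin 3 → ℂ, u i = 0 → u j = 1 → u k = 0 → aeval u f = 0)
    (h3 : ∀ l : ℂ, l ^ m = (-1) ^ m → ∀ u : Fin 3 → ℂ, u i = 1 → u j = l → u k = 0 →
      aeval u f = 0) :
    ∃ a : ℂ, aeval v f = Polynomial.C a *
      (Polynomial.X * (Polynomial.X ^ m - Polynomial.C ((-1) ^ m))) := by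
  have hall : ∀ t, t = i ∨ t = j ∨ t = k := by
    clear hi hj hk h1 h2 h3; revert i j k; decide
  have hev : ∀ (w : Fin 3 → Polynomial ℂ) (t : ℂ), (aeval w f).eval t =
      aeval (fun s => (w s).eval t) f := by
    intro w t
    have := comp_aeval_apply (R := ℂ) (f := w) (Polynomial.aeval t) f
    simpa [Polynomial.coe_aeval_eq_eval] using this
  apply univ_lemma m hm
  · have hn : (aeval v f).natDegree ≤ m + 2 := by
      have := aeval_natDegree_le (m := m + 2) (n := 1) f hf.totalDegree_le v (by
        intro t
        rcases hall t with rfl | rfl | rfl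
        · simp [hi]
        · simp [hj]
        · simp [hk])
      simpa using this
    have hc : (aeval v f).coeff (m + 2) = 0 := by
      have e1 := coeff_line i j k hij hik hjk v hi hj hk hf (Finsupp.single j (m+2))
        (by simp [hij, hjk.symm]) (by simp [hjk.symm])
      let w : Fin 3 → Polynomial ℂ := fun t => if t = j then 1 else if t = i then Polynomial.X else 0
      have e2 := coeff_line j i k hij.symm hjk hik w (by simp [w]) (by simp [w, hij])
        (by simp [w, hik.symm, hjk.symm]) hf (Finsupp.single j (m+2))
        (by simp [hij, hjk.symm]) (by simp [hjk.symm])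
      rw [Finsupp.single_eq_same] at e1
      rw [e1, ← e2, Finsupp.single_eq_of_ne hij, Polynomial.coeff_zero_eq_eval_zero, hev]
      apply h2 <;> simp [w, hij, hik.symm, hjk.symm]
    rw [Polynomial.natDegree_le_iff_coeff_eq_zero] at hn ⊢
    intro n h
    rcases eq_or_ne n (m+2) with rfl | h'
    · exact hc
    · exact hn n (by omega)
  · rw [hev]; apply h1 <;> simp [hi, hj, hk]
  · intro l hl
    rw [hev]; apply h3 l hl <;> simp [hi, hj, hk]

lemma finrank_hom (n : ℕ) : Module.finrank ℂ (homogeneousSubmodule (Fin 3) ℂ n)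
    = (n + 2).choose 2 := by
  have e : homogeneousSubmodule (Fin 3) ℂ n = restrictSupport ℂ {d | d.degree = n} :=
    homogeneousSubmodule_eq_finsupp_supported _ _ n
  rw [e, Module.finrank_eq_nat_card_basis (basisRestrictSupport ℂ {d : Fin 3 →₀ ℕ | d.degree = n})]
  have : {d : Fin 3 →₀ ℕ | d.degree = n} = (Finset.finsuppAntidiag Finset.univ n : Finset (Fin 3 →₀ ℕ)) := by
    ext d; simp [Finsupp.degree_eq_sum]
  rw [this, Nat.card_coe_set_eq, Set.ncard_coe_finset]
  have := Finset.card_finsuppAntidiag_nat_eq_choose (s := (Finset.univ : Finset (Fin 3))) n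
  rw [this]
  simp
  rw [add_comm 2 n, Nat.choose_symm_add]

/-- Parametrisation of the space. -/
noncomputable def phi (m : ℕ) :
    ((Fin 3 → ℂ) × homogeneousSubmodule (Fin 3) ℂ (m - 1)) →ₗ[ℂ] MvPolynomial (Fin 3) ℂ where
  toFun p := C (p.1 0) * Gx m + C (p.1 1) * Gy m + C (p.1 2) * Gz m +
    X 0 * X 1 * X 2 * (p.2 : MvPolynomial (Fin 3) ℂ)
  map_add' p q := by
    simp only [Prod.fst_add, Prod.snd_add, Pi.add_apply, C_add, Submodule.coe_add]; ring
  map_smul' c p := by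
    simp only [Prod.smul_fst, Prod.smul_snd, Pi.smul_apply, smul_eq_mul, C_mul,
      Submodule.coe_smul, RingHom.id_apply, smul_eq_C_mul]; ring

lemma phi_apply (m : ℕ) (p) : phi m p =
    C (p.1 0) * Gx m + C (p.1 1) * Gy m + C (p.1 2) * Gz m +
    X 0 * X 1 * X 2 * (p.2 : MvPolynomial (Fin 3) ℂ) := rfl

lemma hom_aux (m : ℕ) (i j : Fin 3) :
    (X i * X j * ((X i) ^ m - (-(X j)) ^ m) : MvPolynomial (Fin 3) ℂ).IsHomogeneous (m + 2) := by
  have h1 : (X i * X j : MvPolynomial (Fin 3) ℂ).IsHomogeneous (1 + 1) :=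
    (isHomogeneous_X ℂ i).mul (isHomogeneous_X ℂ j)
  have h2 : ((X i) ^ m - (-(X j)) ^ m : MvPolynomial (Fin 3) ℂ).IsHomogeneous (1 * m) :=
    ((isHomogeneous_X ℂ i).pow m).sub (((isHomogeneous_X ℂ j).neg).pow m)
  have := h1.mul h2
  rwa [show 1 + 1 + 1 * m = m + 2 by ring] at this

lemma hom_phi (m : ℕ) (hm : 2 ≤ m) (p) : (phi m p).IsHomogeneous (m + 2) := by
  rw [phi_apply]
  refine IsHomogeneous.add (IsHomogeneous.add (IsHomogeneous.add ?_ ?_) ?_) ?_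
  · exact (hom_aux m 1 2).C_mul _
  · exact (hom_aux m 2 0).C_mul _
  · exact (hom_aux m 0 1).C_mul _
  · have := (((isHomogeneous_X ℂ (0 : Fin 3)).mul (isHomogeneous_X ℂ (1 : Fin 3))).mul
      (isHomogeneous_X ℂ (2 : Fin 3))).mul
        ((mem_homogeneousSubmodule _ _).mp p.2.2)
    rwa [show 1 + 1 + 1 + (m - 1) = m + 2 by omega] at this

lemma mem_Vm3 (m : ℕ) (f : MvPolynomial (Fin 3) ℂ) :
    f ∈ Vm3 m ↔ f.IsHomogeneous (m + 2) ∧ ∀ v ∈ Zm3 m, aeval v f = 0 := by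
  simp [Vm3, Submodule.mem_inf, Submodule.mem_iInf]

lemma range_le (m : ℕ) (hm : 2 ≤ m) : LinearMap.range (phi m) ≤ Vm3 m := by
  rintro _ ⟨p, rfl⟩
  rw [mem_Vm3]
  refine ⟨hom_phi m hm p, ?_⟩
  have hm0 : m ≠ 0 := by omega
  have hsq : ((-1 : ℂ) ^ m) * (-1) ^ m = 1 := by rw [← mul_pow]; simp
  intro v hv
  rw [phi_apply]
  rcases hv with hv | ⟨l, hl, hv⟩
  · simp only [Set.mem_insert_iff, Set.mem_singleton_iff] at hv
    rcases hv with rfl | rfl | rfl <;> simp [Gx, Gy, Gz]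
  · have : (-l) ^ m = 1 := by rw [neg_pow, hl, hsq]
    rcases hv with rfl | rfl | rfl <;> simp [Gx, Gy, Gz, this]

lemma div_xyz (m : ℕ) (hm : 2 ≤ m) (r : MvPolynomial (Fin 3) ℂ) (hr : r.IsHomogeneous (m + 2))
    (h : ∀ (d : Fin 3 →₀ ℕ) (t : Fin 3), d 0 + d 1 + d 2 = m + 2 → d t = 0 → coeff d r = 0) :
    ∃ q ∈ homogeneousSubmodule (Fin 3) ℂ (m - 1), r = X 0 * X 1 * X 2 * q := by
  have hdeg : ∀ e : Fin 3 →₀ ℕ, coeff e r ≠ 0 → e 0 + e 1 + e 2 = m + 2 := by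
    intro e he
    have := hr he
    rw [weight_one3] at this
    rw [← this, Finsupp.degree_eq_sum, Fin.sum_univ_three]
  let s : Fin 3 →₀ ℕ := Finsupp.single 0 1 + Finsupp.single 1 1 + Finsupp.single 2 1
  have hst : ∀ t, s t = 1 := by
    intro t; fin_cases t <;> simp [s]
  have hs : monomial s (1 : ℂ) = X 0 * X 1 * X 2 := by
    simp [s, X, monomial_mul]
  have hdvd : monomial s (1 : ℂ) ∣ r := by
    rw [monomial_one_dvd_iff_modMonomial_eq_zero]
    ext d
    rw [coeff_zero]
    by_cases hd : s ≤ d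
    · exact coeff_modMonomial_of_le _ hd
    · rw [coeff_modMonomial_of_not_le _ hd]
      rw [Finsupp.le_def] at hd
      push Not at hd
      obtain ⟨t, ht⟩ := hd
      rw [hst] at ht
      by_contra hne
      exact hne (h d t (hdeg d hne) (by omega))
  obtain ⟨q, hq⟩ := hdvd
  refine ⟨q, ?_, by rw [hq, hs]⟩
  rw [mem_homogeneousSubmodule]
  intro d hd
  have := hdeg (s + d) (by rwa [hq, coeff_monomial_mul, one_mul])
  simp only [Finsupp.add_apply, hst] at this
  rw [weight_one3, Finsupp.degree_eq_sum, Fin.sum_univ_three]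
  omega

lemma le_range (m : ℕ) (hm : 2 ≤ m) : Vm3 m ≤ LinearMap.range (phi m) := by
  intro f hf
  rw [mem_Vm3] at hf
  obtain ⟨hf, hv⟩ := hf
  have vec : ∀ (u : Fin 3 → ℂ) (a b c : ℂ), u 0 = a → u 1 = b → u 2 = c → u = ![a, b, c] := by
    rintro u a b c rfl rfl rfl
    ext t; fin_cases t <;> rfl
  have p1 : ∀ u : Fin 3 → ℂ, u 0 = 1 → u 1 = 0 → u 2 = 0 → aeval u f = 0 := by
    intro u h0 h1 h2; rw [vec u _ _ _ h0 h1 h2]; exact hv _ (by simp [Zm3])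
  have p2 : ∀ u : Fin 3 → ℂ, u 0 = 0 → u 1 = 1 → u 2 = 0 → aeval u f = 0 := by
    intro u h0 h1 h2; rw [vec u _ _ _ h0 h1 h2]; exact hv _ (by simp [Zm3])
  have p3 : ∀ u : Fin 3 → ℂ, u 0 = 0 → u 1 = 0 → u 2 = 1 → aeval u f = 0 := by
    intro u h0 h1 h2; rw [vec u _ _ _ h0 h1 h2]; exact hv _ (by simp [Zm3])
  obtain ⟨c, hc⟩ := side m hm 0 1 2 (by decide) (by decide) (by decide) ![1, Polynomial.X, 0]
    rfl rfl rfl hf p1 p2 (by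
      intro l hl u h0 h1 h2
      rw [vec u _ _ _ h0 h1 h2]; exact hv _ (Or.inr ⟨l, hl, Or.inl rfl⟩))
  obtain ⟨a, ha⟩ := side m hm 1 2 0 (by decide) (by decide) (by decide) ![0, 1, Polynomial.X]
    rfl rfl rfl hf (fun u h0 h1 h2 => p2 u h2 h0 h1) (fun u h0 h1 h2 => p3 u h2 h0 h1) (by
      intro l hl u h0 h1 h2
      rw [vec u _ _ _ h2 h0 h1]; exact hv _ (Or.inr ⟨l, hl, Or.inr (Or.inl rfl)⟩))
  obtain ⟨b, hb⟩ := side m hm 2 0 1 (by decide) (by decide) (by decide) ![Polynomial.X, 0, 1]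
    rfl rfl rfl hf (fun u h0 h1 h2 => p3 u h1 h2 h0) (fun u h0 h1 h2 => p1 u h1 h2 h0) (by
      intro l hl u h0 h1 h2
      rw [vec u _ _ _ h1 h2 h0]; exact hv _ (Or.inr ⟨l, hl, Or.inr (Or.inr rfl)⟩))
  let e : ℂ := (-1) ^ m
  have he : e * e = 1 := by simp only [e]; rw [← mul_pow]; simp
  have hee : Polynomial.C e * Polynomial.C e = 1 := by rw [← Polynomial.C_mul, he, Polynomial.C_1]
  have hX : (-Polynomial.X : Polynomial ℂ) ^ m = Polynomial.C e * Polynomial.X ^ m := by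
    rw [neg_pow]; simp [e]
  let w : (Fin 3 → ℂ) × homogeneousSubmodule (Fin 3) ℂ (m - 1) := (![-e * a, -e * b, -e * c], 0)
  let r := f - phi m w
  have hr : r.IsHomogeneous (m + 2) := hf.sub (hom_phi m hm w)
  have rz : aeval (![1, Polynomial.X, 0] : Fin 3 → Polynomial ℂ) r = 0 := by
    simp only [r, map_sub, hc, phi_apply, w]
    simp [Gx, Gy, Gz, hX]
    rw [show ((-1 : Polynomial ℂ) ^ m) = Polynomial.C e by simp [e]]
    linear_combination (-Polynomial.C c * Polynomial.X * Polynomial.X ^ m) * hee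
  have rx : aeval (![0, 1, Polynomial.X] : Fin 3 → Polynomial ℂ) r = 0 := by
    simp only [r, map_sub, ha, phi_apply, w]
    simp [Gx, Gy, Gz, hX]
    rw [show ((-1 : Polynomial ℂ) ^ m) = Polynomial.C e by simp [e]]
    linear_combination (-Polynomial.C a * Polynomial.X * Polynomial.X ^ m) * hee
  have ry : aeval (![Polynomial.X, 0, 1] : Fin 3 → Polynomial ℂ) r = 0 := by
    simp only [r, map_sub, hb, phi_apply, w]
    simp [Gx, Gy, Gz, hX]
    rw [show ((-1 : Polynomial ℂ) ^ m) = Polynomial.C e by simp [e]]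
    linear_combination (-Polynomial.C b * Polynomial.X * Polynomial.X ^ m) * hee
  obtain ⟨q, hq, hrq⟩ := div_xyz m hm r hr (by
    intro d t hd ht
    fin_cases t
    · rw [← coeff_line 1 2 0 (by decide) (by decide) (by decide) ![0, 1, Polynomial.X]
        rfl rfl rfl hr d (by omega) ht, rx, Polynomial.coeff_zero]
    · rw [← coeff_line 2 0 1 (by decide) (by decide) (by decide) ![Polynomial.X, 0, 1]
        rfl rfl rfl hr d (by omega) ht, ry, Polynomial.coeff_zero]
    · rw [← coeff_line 0 1 2 (by decide) (by decide) (by decide) ![1, Polynomial.X, 0]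
        rfl rfl rfl hr d (by omega) ht, rz, Polynomial.coeff_zero])
  refine ⟨w + (0, ⟨q, hq⟩), ?_⟩
  rw [map_add, phi_apply m (0, _)]
  simp only [Pi.zero_apply, C_0, zero_mul, zero_add]
  rw [← hrq]
  simp [r]

lemma phi_inj (m : ℕ) (hm : 2 ≤ m) : Function.Injective (phi m) := by
  rw [← LinearMap.ker_eq_bot, LinearMap.ker_eq_bot']
  intro p hp
  have hm0 : m ≠ 0 := by omega
  rw [phi_apply] at hp
  have hne : (2 : ℂ) ^ m - (-1) ^ m ≠ 0 := by
    intro h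
    have h1 := congrArg norm (sub_eq_zero.mp h)
    simp only [norm_pow, norm_neg, norm_one, one_pow, Complex.norm_ofNat] at h1
    exact (one_lt_pow₀ (by norm_num : (1 : ℝ) < 2) hm0).ne' h1
  have h0 : p.1 0 = 0 := by
    have := congrArg (aeval (![0, 2, 1] : Fin 3 → ℂ)) hp
    simpa [Gx, Gy, Gz, hne] using this
  have h1 : p.1 1 = 0 := by
    have := congrArg (aeval (![1, 0, 2] : Fin 3 → ℂ)) hp
    simpa [Gx, Gy, Gz, hne] using this
  have h2 : p.1 2 = 0 := by
    have := congrArg (aeval (![2, 1, 0] : Fin 3 → ℂ)) hp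
    simpa [Gx, Gy, Gz, hne] using this
  have hq : (p.2 : MvPolynomial (Fin 3) ℂ) = 0 := by
    simpa [h0, h1, h2] using hp
  refine Prod.ext ?_ (Subtype.ext hq)
  ext t
  fin_cases t
  · exact h0
  · exact h1
  · exact h2

lemma range_eq (m : ℕ) (hm : 2 ≤ m) : LinearMap.range (phi m) = Submodule.span ℂ
      ({Gx m, Gy m, Gz m} ∪
        {p | ∃ i j k : ℕ, i + j + k = m - 1 ∧
          p = X 0 * X 1 * X 2 * ((X 0) ^ i * (X 1) ^ j * (X 2) ^ k)}) := by
  apply le_antisymm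
  · rintro _ ⟨p, rfl⟩
    rw [phi_apply]
    simp only [← smul_eq_C_mul]
    refine add_mem (add_mem (add_mem ?_ ?_) ?_) ?_
    · exact Submodule.smul_mem _ _ (Submodule.subset_span (by simp))
    · exact Submodule.smul_mem _ _ (Submodule.subset_span (by simp))
    · exact Submodule.smul_mem _ _ (Submodule.subset_span (by simp))
    · have hq := (mem_homogeneousSubmodule _ _).mp p.2.2
      generalize (p.2 : MvPolynomial (Fin 3) ℂ) = q at hq
      rw [q.as_sum, Finset.mul_sum]
      refine Submodule.sum_mem _ fun d hd => ?_
      have := hq (mem_support_iff.mp hd)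
      rw [weight_one3, Finsupp.degree_eq_sum, Fin.sum_univ_three] at this
      rw [monomial_eq, Finsupp.prod_fintype _ _ (by simp), Fin.prod_univ_three, mul_left_comm,
        ← smul_eq_C_mul]
      exact Submodule.smul_mem _ _ (Submodule.subset_span (Or.inr ⟨_, _, _, this, rfl⟩))
  · rw [Submodule.span_le]
    rintro f (hf | ⟨i, j, k, h, rfl⟩)
    · simp only [Set.mem_insert_iff, Set.mem_singleton_iff] at hf
      rcases hf with rfl | rfl | rfl
      · exact ⟨(![1, 0, 0], 0), by simp [phi_apply]⟩
      · exact ⟨(![0, 1, 0], 0), by simp [phi_apply]⟩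
      · exact ⟨(![0, 0, 1], 0), by simp [phi_apply]⟩
    · refine ⟨(0, ⟨X 0 ^ i * X 1 ^ j * X 2 ^ k, ?_⟩), by simp [phi_apply]⟩
      rw [mem_homogeneousSubmodule, ← h]
      simpa using (((isHomogeneous_X ℂ (0 : Fin 3)).pow i).mul
        ((isHomogeneous_X ℂ (1 : Fin 3)).pow j)).mul ((isHomogeneous_X ℂ (2 : Fin 3)).pow k)

/-- The space of homogeneous degree-`(m+2)` polynomials vanishing on `Z(F_{m,3})` has
dimension `m(m+1)/2 + 3` and is spanned by `G_x, G_y, G_z` together with the products of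
`xyz` with all monomials of degree `m−1`. -/
theorem Fermat_degree_m_plus_two_space (m : ℕ) (hm : 2 ≤ m) :
    Module.finrank ℂ (Vm3 m) = m * (m + 1) / 2 + 3 ∧
    Vm3 m = Submodule.span ℂ
      ({Gx m, Gy m, Gz m} ∪
        {p | ∃ i j k : ℕ, i + j + k = m - 1 ∧
          p = X 0 * X 1 * X 2 * ((X 0) ^ i * (X 1) ^ j * (X 2) ^ k)}) := by
  have hV : Vm3 m = LinearMap.range (phi m) := le_antisymm (le_range m hm) (range_le m hm)
  refine ⟨?_, hV.trans (range_eq m hm)⟩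
  rw [hV, LinearMap.finrank_range_of_inj (phi_inj m hm)]
  have : Module.Finite ℂ (homogeneousSubmodule (Fin 3) ℂ (m - 1)) :=
    Module.Finite.iff_fg.mpr (homogeneousSubmodule_fg _ _ _)
  rw [Module.finrank_prod, finrank_hom, Nat.choose_two_right]
  obtain ⟨n, rfl⟩ : ∃ n, m = n + 1 := ⟨m - 1, by omega⟩
  simp
  rw [add_comm, mul_comm]
end

section
/- A vector v ∈ ℂ³ satisfies (xyz)(v) = G_x(v) = G_y(v) = G_z(v) = 0 if and only if v is a scalar multiple of one of the 3m+3 points of Z(F_{m,3}); equivalently, the common zero locus in ℂ³ of all homogeneous polynomials of degree m+2 vanishing on Z(F_{m,3}) is exactly the union of the 3m+3 lines through the origin spanned by the points of Z(F_{m,3}) (so the corresponding linear system on the blow-up is base point free). -/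
theorem Fermat_aux_fwd (m : ℕ) (a b : ℂ) (h : a * b * (a ^ m - (-b) ^ m) = 0) :
    a = 0 ∨ b = 0 ∨ ∃ l : ℂ, l ^ m = (-1) ^ m ∧ b = a * l := by
  by_cases ha : a = 0
  · exact Or.inl ha
  by_cases hb : b = 0
  · exact Or.inr (Or.inl hb)
  refine Or.inr (Or.inr ⟨b / a, ?_, by field_simp⟩)
  have h1 : a ^ m - (-b) ^ m = 0 := by
    rcases mul_eq_zero.mp h with h | h
    · exact absurd h (mul_ne_zero ha hb)
    · exact h
  have h2 : ((-1 : ℂ) ^ m) * (-1) ^ m = 1 := by rw [← mul_pow]; norm_num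
  have h3 : (-b) ^ m = (-1) ^ m * b ^ m := by rw [← mul_pow]; norm_num
  have ham : a ^ m ≠ 0 := pow_ne_zero m ha
  rw [div_pow, div_eq_iff ham]
  rw [h3] at h1
  linear_combination (-(-1 : ℂ) ^ m) * h1 - b ^ m * h2

theorem Fermat_aux_bwd (m : ℕ) (t l : ℂ) (h : l ^ m = (-1) ^ m) :
    t ^ m - (-(t * l)) ^ m = 0 := by
  have h2 : ((-1 : ℂ) ^ m) * (-1) ^ m = 1 := by rw [← mul_pow]; norm_num
  have h3 : (-(t * l)) ^ m = (-1) ^ m * (t ^ m * l ^ m) := by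
    rw [← mul_pow, ← mul_pow]; ring
  rw [h3, h]
  linear_combination (-t ^ m) * h2

/-- A vector `v ∈ ℂ³` satisfies `(xyz)(v) = G_x(v) = G_y(v) = G_z(v) = 0` if and only if `v`
is a scalar multiple of one of the `3m+3` points of `Z(F_{m,3})`; i.e. the common zero locus
of `xyz, G_x, G_y, G_z` is the union of the `3m+3` lines spanned by the points of
`Z(F_{m,3})` (so the corresponding linear system on the blow-up is base point free). -/
theorem Fermat_base_locus (m : ℕ) (hm : 2 ≤ m) (v : Fin 3 → ℂ) :
    (v 0 * v 1 * v 2 = 0 ∧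
     v 1 * v 2 * ((v 1) ^ m - (-(v 2)) ^ m) = 0 ∧
     v 2 * v 0 * ((v 2) ^ m - (-(v 0)) ^ m) = 0 ∧
     v 0 * v 1 * ((v 0) ^ m - (-(v 1)) ^ m) = 0) ↔
    ∃ p ∈ Zm3 m, ∃ t : ℂ, v = t • p := by
  constructor
  · rintro ⟨h, hx, hy, hz⟩
    rcases mul_eq_zero.mp h with h | h2
    · rcases mul_eq_zero.mp h with h0 | h1
      · rcases Fermat_aux_fwd m _ _ hx with h | h | ⟨l, hl, h⟩
        · exact ⟨![0,0,1], by simp [Zm3], v 2, by ext i; fin_cases i <;> simp [h0, h]⟩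
        · exact ⟨![0,1,0], by simp [Zm3], v 1, by ext i; fin_cases i <;> simp [h0, h]⟩
        · exact ⟨![0,1,l], Or.inr ⟨l, hl, Or.inr (Or.inl rfl)⟩, v 1,
            by ext i; fin_cases i <;> simp [h0, h]⟩
      · rcases Fermat_aux_fwd m _ _ hy with h | h | ⟨l, hl, h⟩
        · exact ⟨![1,0,0], by simp [Zm3], v 0, by ext i; fin_cases i <;> simp [h1, h]⟩
        · exact ⟨![0,0,1], by simp [Zm3], v 2, by ext i; fin_cases i <;> simp [h1, h]⟩
        · exact ⟨![l,0,1], Or.inr ⟨l, hl, Or.inr (Or.inr rfl)⟩, v 2,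
            by ext i; fin_cases i <;> simp [h1, h]⟩
    · rcases Fermat_aux_fwd m _ _ hz with h | h | ⟨l, hl, h⟩
      · exact ⟨![0,1,0], by simp [Zm3], v 1, by ext i; fin_cases i <;> simp [h2, h]⟩
      · exact ⟨![1,0,0], by simp [Zm3], v 0, by ext i; fin_cases i <;> simp [h2, h]⟩
      · exact ⟨![1,l,0], Or.inr ⟨l, hl, Or.inl rfl⟩, v 0,
          by ext i; fin_cases i <;> simp [h2, h]⟩
  · rintro ⟨p, hp, t, rfl⟩
    rcases hp with (rfl | rfl | rfl) | ⟨l, hl, rfl | rfl | rfl⟩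
    · simp
    · simp
    · simp
    all_goals
      have := Fermat_aux_bwd m t l hl
      simp [this]
end

section
/- For every a,b,c ∈ ℂ and every point P of Z(F_{m,3}), the polynomial C_{R,m} vanishes at (x,y,z) = P; that is, substituting each of the 3m+3 points of Z(F_{m,3}) for (x,y,z) in C_{R,m} yields the zero polynomial in ℂ[a,b,c]. -/
/-- The unexpected curve `C_{R,m}` of degree `m+2` with multiplicity `m+1` at the general
point `R = (a:b:c)`, evaluated at `(a,b,c,x,y,z)`. -/
noncomputable def CRm (m : ℕ) (a b c x y z : ℂ) : ℂ :=
  x*y*z *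
    ( (m+1 : ℂ) * ( a*(b^m + (-1:ℂ)^(m+1)*c^m)*x^(m-1)
                  + b*(a^m + (-1:ℂ)^(m+1)*c^m)*y^(m-1)
                  + c*(a^m + (-1:ℂ)^(m+1)*b^m)*z^(m-1) )
    + ∑ i ∈ Finset.Icc 1 (m-2), (-1:ℂ)^(i+1) * (Nat.choose (m+1) (i+1) : ℂ) *
        ( a^(m-i)*b^(i+1)*x^i*y^(m-i-1)
        + a^(m-i)*c^(i+1)*x^i*z^(m-i-1)
        + b^(m-i)*c^(i+1)*y^i*z^(m-i-1) ) )
  + a^(m+1) * (y*z*(y^m - (-z)^m))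
  + b^(m+1) * (z*x*(z^m - (-x)^m))
  + c^(m+1) * (x*y*(x^m - (-y)^m))

/-- For every `a,b,c ∈ ℂ`, the polynomial `C_{R,m}` vanishes at every point of `Z(F_{m,3})`. -/
theorem CRm_vanishes_on_Zm3 (m : ℕ) (hm : 5 ≤ m) (a b c : ℂ) :
    ∀ p ∈ Zm3 m, CRm m a b c (p 0) (p 1) (p 2) = 0 := by
  intro p hp
  have h0 : m ≠ 0 := by omega
  rcases hp with hp | ⟨l, hl, hp⟩
  · rcases hp with rfl | rfl | rfl <;> simp [CRm]
  · have key : (-l) ^ m = 1 := by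
      rw [neg_pow, hl, ← mul_pow]; simp
    rcases hp with rfl | rfl | rfl <;> simp [CRm, key, h0]
end
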